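/- Let p₁ be any element of ℂ(t,M) and set b₀ = −(a₀(t,t²M) − a₁(t,t²M)·p₁)/(a₁(t,M)·a₁(t,t²M)) ∈ ℂ(t,M). Then b₀(t,M⁻¹) = −b₀(t,M) holds if and only if (M⁸t¹⁴ − M⁴t¹⁰)·p₁(t,M) − (M⁸t¹⁰ − M⁴t¹⁴)·p₁(t,M⁻¹) = 1 + M¹² − M²t⁴ − M⁴t⁴ − M⁸t⁴ − M¹⁰t⁴ − M⁴t⁸ − M⁸t⁸ + M⁴t¹⁶ + M⁸t¹⁶ + M²t²⁰ + M⁴t²⁰ + M⁸t²⁰ + M¹⁰t²⁰ − t²⁴ − M¹²t²⁴. -/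

import Mathlib

/-!
Write `c = a₁(t,t²M)`. Inversion `M ↦ M⁻¹` sends `a₁` to `-c` and `c` to `-a₁`, so it fixes the
denominator `a₁ c` of `b₀`. Antisymmetry of `b₀` is therefore antisymmetry of its numerator
`a₀(t,t²M) - c p₁`, that is `c p₁ - a₁ p₁(t,M⁻¹) = a₀(t,t²M) + a₀(t,t²M⁻¹)`. Multiplying by the unit
`t¹² M⁶` gives the stated equation; the identities of Laurent polynomials (`mon_mul_sU_a1`,
`mon_mul_a1`, `mon_mul_a0_sum`) are checked by expanding into monomials.
-/

noncomputable section

/-- The Laurent polynomial ring `ℂ[t^{±1}, M^{±1}]`, realized as the group algebra of `ℤ × ℤ`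
over `ℂ`.  The element `mon a b` below is the monomial `t^a * M^b`. -/
abbrev R2 : Type := AddMonoidAlgebra ℂ (ℤ × ℤ)

instance : IsDomain R2 := NoZeroDivisors.to_isDomain _

/-- The monomial `t^a * M^b` in `ℂ[t^{±1}, M^{±1}]`. -/
def mon (a b : ℤ) : R2 := AddMonoidAlgebra.single (a, b) (1 : ℂ)
/-- The exponent map corresponding to the substitution `(t, M) ↦ (t, t²M)`. -/
def eU : (ℤ × ℤ) ≃+ (ℤ × ℤ) where
  toFun p := (p.1 + 2 * p.2, p.2)
  invFun p := (p.1 - 2 * p.2, p.2)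
  left_inv p := by ext <;> simp
  right_inv p := by ext <;> simp
  map_add' p q := by ext <;> simp <;> ring

/-- The exponent map corresponding to the substitution `(t, M) ↦ (t, t⁻²M)`. -/
def eD : (ℤ × ℤ) ≃+ (ℤ × ℤ) where
  toFun p := (p.1 - 2 * p.2, p.2)
  invFun p := (p.1 + 2 * p.2, p.2)
  left_inv p := by ext <;> simp
  right_inv p := by ext <;> simp
  map_add' p q := by ext <;> simp <;> ring

/-- The exponent map corresponding to the substitution `(t, M) ↦ (t, M⁻¹)`. -/
def eI : (ℤ × ℤ) ≃+ (ℤ × ℤ) where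
  toFun p := (p.1, -p.2)
  invFun p := (p.1, -p.2)
  left_inv p := by ext <;> simp
  right_inv p := by ext <;> simp
  map_add' p q := by ext <;> simp <;> ring

/-- The substitution automorphism `F(t, M) ↦ F(t, t²M)` of `ℂ[t^{±1}, M^{±1}]`. -/
def sU : R2 ≃ₐ[ℂ] R2 := AddMonoidAlgebra.domCongr ℂ ℂ eU

/-- The substitution automorphism `F(t, M) ↦ F(t, t⁻²M)` of `ℂ[t^{±1}, M^{±1}]`. -/
def sD : R2 ≃ₐ[ℂ] R2 := AddMonoidAlgebra.domCongr ℂ ℂ eD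

/-- The substitution automorphism `F(t, M) ↦ F(t, M⁻¹)` of `ℂ[t^{±1}, M^{±1}]`. -/
def sI : R2 ≃ₐ[ℂ] R2 := AddMonoidAlgebra.domCongr ℂ ℂ eI
/-- `a₁(t,M) = t⁻²M² − t²M⁻²`. -/
def a1 : R2 := mon (-2) 2 - mon 2 (-2)

/-- `a₋₁(t,M) = t²M² − t⁻²M⁻²`. -/
def am1 : R2 := mon 2 2 - mon (-2) (-2)

/-- `a₀(t,M) = (M² − M⁻²)(−M⁴ − M⁻⁴ + M² + M⁻² + t⁴ + t⁻⁴)`. -/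
def a0 : R2 :=
  (mon 0 2 - mon 0 (-2)) *
    (-(mon 0 4) - mon 0 (-4) + mon 0 2 + mon 0 (-2) + mon 4 0 + mon (-4) 0)

/-- `A₁(t,M) = −a₁(t,M)·a₁(t,t²M)·a₋₁(t,t⁻²M)`. -/
def A1 : R2 := -(a1 * sU a1 * sD am1)

/-- `B₁(t,M) = a₀(t,M)·a₁(t,t²M)·a₋₁(t,t⁻²M)`. -/
def B1 : R2 := a0 * sU a1 * sD am1

/-- `C₁(t,M) = −a₁(t,M)·a₁(t,t⁻²M)·a₁(t,t²M) + a₀(t,M)·a₀(t,t²M)·a₋₁(t,t⁻²M)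
    − a₁(t,M)·a₋₁(t,t⁻²M)·a₋₁(t,t²M)`. -/
def C1 : R2 := -(a1 * sD a1 * sU a1) + a0 * sU a0 * sD am1 - a1 * sD am1 * sU am1
/-- The fraction field `ℂ(t, M)` of the Laurent polynomial ring `ℂ[t^{±1}, M^{±1}]`. -/
abbrev K2 : Type := FractionRing R2

/-- The canonical inclusion `ℂ[t^{±1}, M^{±1}] → ℂ(t, M)`. -/
def ι : R2 →+* K2 := algebraMap R2 K2

/-- The substitution automorphism of `ℂ(t,M)` fixing `t` and sending `M` to `M⁻¹`. -/
def σI : K2 ≃+* K2 := IsFractionRing.ringEquivOfRingEquiv (sI : R2 ≃+* R2)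
/-- The right-hand side
`1 + M¹² − M²t⁴ − M⁴t⁴ − M⁸t⁴ − M¹⁰t⁴ − M⁴t⁸ − M⁸t⁸ + M⁴t¹⁶ + M⁸t¹⁶ + M²t²⁰ + M⁴t²⁰
+ M⁸t²⁰ + M¹⁰t²⁰ − t²⁴ − M¹²t²⁴`. -/
def rhs13 : R2 :=
  1 + mon 0 12 - mon 4 2 - mon 4 4 - mon 4 8 - mon 4 10 - mon 8 4 - mon 8 8
    + mon 16 4 + mon 16 8 + mon 20 2 + mon 20 4 + mon 20 8 + mon 20 10
    - mon 24 0 - mon 24 12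

lemma mon_mul (a b c d : ℤ) : mon a b * mon c d = mon (a + c) (b + d) := by
  simp [mon, AddMonoidAlgebra.single_mul_single]

lemma mon_zero : mon 0 0 = 1 := rfl

lemma sU_mon (a b : ℤ) : sU (mon a b) = mon (a + 2 * b) b := by
  simp [sU, mon, eU]

lemma sI_mon (a b : ℤ) : sI (mon a b) = mon a (-b) := by
  simp [sI, mon, eI]

lemma σI_ι (x : R2) : σI (ι x) = ι (sI x) := by
  simp [σI, ι]

lemma sI_a1 : sI a1 = -sU a1 := by
  simp [a1, sI_mon, sU_mon]

lemma sI_sU_a1 : sI (sU a1) = -a1 := by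
  simp [a1, sI_mon, sU_mon]

lemma a1_ne_zero : a1 ≠ 0 := by
  intro h
  have h2 : mon (-2) 2 = mon 2 (-2) := sub_eq_zero.mp h
  have h3 := (AddMonoidAlgebra.single_left_inj one_ne_zero).mp h2
  simp at h3

lemma mon_mul_sU_a1 : mon 12 6 * sU a1 = mon 14 8 - mon 10 4 := by
  simp [a1, sU_mon, mul_sub, mon_mul]

lemma mon_mul_a1 : mon 12 6 * a1 = mon 10 8 - mon 14 4 := by
  simp [a1, mul_sub, mon_mul]

lemma mon_mul_a0_sum : mon 12 6 * (sU a0 + sI (sU a0)) = rhs13 := by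
  simp [a0, rhs13, sU_mon, sI_mon, mul_sub, sub_mul, mul_add, mon_mul, mon_zero]
  abel

/-- With `b₀ = −(a₀(t,t²M) − a₁(t,t²M)p₁)/(a₁(t,M)a₁(t,t²M))`, the condition
`b₀(t,M⁻¹) = −b₀(t,M)` is equivalent to the stated functional equation for `p₁`. -/
theorem b0_antisymmetric_iff (p1 b0 : K2)
    (hb0 : b0 = -((ι (sU a0) - ι (sU a1) * p1) / (ι a1 * ι (sU a1)))) :
    σI b0 = -b0 ↔
      ι (mon 14 8 - mon 10 4) * p1 - ι (mon 10 8 - mon 14 4) * σI p1 = ι rhs13 := by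
  have h1 : ι a1 ≠ 0 := by
    simpa [ι] using a1_ne_zero
  have h2 : ι (sU a1) ≠ 0 := by
    simpa [ι] using a1_ne_zero
  have hm : ι (mon 12 6) ≠ 0 := by
    have h : mon 12 6 * mon (-12) (-6) = 1 := by simp [mon_mul, mon_zero]
    exact left_ne_zero_of_mul_eq_one (by rw [← map_mul, h, map_one])
  have hσ : σI b0 = -((ι (sI (sU a0)) + ι a1 * σI p1) / (ι a1 * ι (sU a1))) := by
    rw [hb0]
    simp only [map_neg, map_div₀, map_sub, map_mul, σI_ι, sI_a1, sI_sU_a1]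
    ring
  rw [hσ, hb0, ← mon_mul_sU_a1, ← mon_mul_a1, ← mon_mul_a0_sum, neg_inj, ← neg_div,
    div_left_inj' (mul_ne_zero h1 h2)]
  simp only [map_mul, map_add]
  constructor
  · intro h
    linear_combination (-ι (mon 12 6)) * h
  · intro h
    apply mul_left_cancel₀ hm
    linear_combination -h
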